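/- If a symmetric NE distribution ψ_j has an atom at x > g_j(c) (i.e., positive probability mass at x), then there exists ε > 0 such that φ_j(x − ε) > φ_j(x), contradicting that x is a best response. Formally: let r : ℝ → [0,1] satisfy r(x−ε) ≥ r(x) + γ for all ε > 0 where γ > 0 is fixed, let f be continuous and strictly increasing with f(x) > c. Then there exists ε > 0 with (f(x−ε) − c)·r(x−ε) > (f(x) − c)·r(x). -/

import Mathlib

open Filter Topology

theorem eventually_mul_lt_mul_of_tendsto_of_eventually_le {α R : Type*} [MulZeroClass R]
    [LinearOrder R] [PosMulStrictMono R] [TopologicalSpace R] [OrderClosedTopology R]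
    [SeparatelyContinuousMul R] {l : Filter α} {g r : α → R} {a b b' : R}
    (hg : Tendsto g l (𝓝 a)) (ha : 0 < a) (hb : b < b') (hr : ∀ᶠ i in l, b' ≤ r i) :
    ∀ᶠ i in l, a * b < g i * r i := by
  have hlim : Tendsto (fun i ↦ g i * b') l (𝓝 (a * b')) := hg.mul_const b'
  have hgain : a * b < a * b' := mul_lt_mul_of_pos_left hb ha
  filter_upwards [hg.eventually_const_lt ha, hlim.eventually_const_lt hgain, hr]
    with i hpos hlt hle
  calc
    a * b < g i * b' := hlt
    _ ≤ g i * r i := mul_le_mul_of_nonneg_left hle hpos.le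

theorem tendsto_const_sub_nhdsGT_zero {G : Type*} [AddCommGroup G] [PartialOrder G]
    [IsOrderedAddMonoid G] [TopologicalSpace G] [ContinuousSub G] (x : G) :
    Tendsto (fun ε ↦ x - ε) (𝓝[>] 0) (𝓝[<] x) := by
  have hlim : Tendsto (fun ε ↦ x - ε) (𝓝 0) (𝓝 x) := by
    simpa only [sub_zero] using (continuous_sub_left x).tendsto 0
  exact hlim.inf (tendsto_principal_principal.2 fun _ hε ↦ sub_lt_self x hε)

theorem undercut_profitable_general {G R : Type*} [AddCommGroup G] [PartialOrder G]
    [IsOrderedAddMonoid G] [TopologicalSpace G] [ContinuousSub G]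
    [Ring R] [LinearOrder R] [IsStrictOrderedRing R] [TopologicalSpace R]
    [OrderClosedTopology R] [IsTopologicalRing R]
    {c γ : R} {x : G} (hγ : 0 < γ) {f r : G → R} (hf : ContinuousWithinAt f (Set.Iio x) x)
    (hfx : c < f x) (hjump : ∀ᶠ ε in 𝓝[>] 0, r x + γ ≤ r (x - ε)) :
    ∀ᶠ ε in 𝓝[>] 0, (f x - c) * r x < (f (x - ε) - c) * r (x - ε) := by
  have hmargin : Tendsto (fun ε ↦ f (x - ε) - c) (𝓝[>] 0) (𝓝 (f x - c)) :=
    (hf.tendsto.comp (tendsto_const_sub_nhdsGT_zero x)).sub_const c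
  exact eventually_mul_lt_mul_of_tendsto_of_eventually_le hmargin (sub_pos.2 hfx)
    (lt_add_of_pos_right (r x) hγ) hjump

/-- Core step of Theorem 1 (no atoms): if `r(x−ε) ≥ r(x) + γ` for all `ε > 0`
with fixed `γ > 0`, and `f` is continuous strictly increasing with `f(x) > c`,
then there exists `ε > 0` with `(f(x−ε) − c)·r(x−ε) > (f(x) − c)·r(x)`. -/
theorem undercut_profitable (c x γ : ℝ) (hγ : 0 < γ)
    (f r : ℝ → ℝ) (hfcont : Continuous f) (hfmono : StrictMono f)
    (hfx : c < f x) (hr : ∀ y, r y ∈ Set.Icc (0 : ℝ) 1)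
    (hjump : ∀ ε : ℝ, 0 < ε → r (x - ε) ≥ r x + γ) :
    ∃ ε : ℝ, 0 < ε ∧ (f (x - ε) - c) * r (x - ε) > (f x - c) * r x :=
  (eventually_mem_nhdsWithin.and <| undercut_profitable_general hγ hfcont.continuousWithinAt hfx <|
    eventually_nhdsWithin_of_forall hjump).exists
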